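/- Let n ≥ 3 be an odd integer and let k ≥ 2 be an integer with 5 ∤ (4k^n − 1), and set d = 4(1 − 4k^n)^n. Then d + 100 = 4(25 − (4k^n − 1)^n), so ℚ(√(d + 100)) = ℚ(√(25 − (4k^n − 1)^n)), and n divides the class number of the imaginary quadratic field ℚ(√(d + 100)). -/

import Mathlib

/-- The quadratic field `ℚ(√d)`, realized as the subfield of `ℂ` generated over `ℚ`
by a complex square root of `d`. -/
noncomputable def Qsqrt (d : ℤ) : IntermediateField ℚ ℂ :=
  IntermediateField.adjoin ℚ {((d : ℂ) ^ ((1 : ℂ) / 2))}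

/-- The class number of `ℚ(√d)`: the order of the ideal class group of its ring of
integers. -/
noncomputable def classNumSqrt (d : ℤ) : ℕ :=
  Nat.card (ClassGroup (NumberField.RingOfIntegers (Qsqrt d)))


/-- Trace sequence. -/
def Vs (a Y : ℤ) : ℕ → ℤ
  | 0 => 1
  | 1 => a
  | (j+2) => 2 * a * Vs a Y (j+1) - Y * Vs a Y j

lemma Vs_eq (a Y w : ℤ) (hw : w = a ^ 2 - Y) (j : ℕ) :
    (((⟨a, 1⟩ : ℤ√w) ^ j).re = Vs a Y j) ∧ (((⟨a, 1⟩ : ℤ√w) ^ (j+1)).re = Vs a Y (j+1)) := by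
  induction j with
  | zero => simp [Vs]
  | succ j ih =>
    refine ⟨ih.2, ?_⟩
    have e : (⟨a, 1⟩ : ℤ√w) ^ (j+2) = ((2 * a : ℤ) : ℤ√w) * (⟨a,1⟩ : ℤ√w)^(j+1)
        - ((Y : ℤ) : ℤ√w) * (⟨a,1⟩ : ℤ√w)^j := by
      have : (⟨a, 1⟩ : ℤ√w) ^ 2 = ((2 * a : ℤ) : ℤ√w) * (⟨a,1⟩ : ℤ√w) - ((Y : ℤ) : ℤ√w) := by
        rw [Zsqrtd.ext_iff]; simp [pow_two]; exact ⟨by rw [hw]; ring, by ring⟩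
      rw [pow_add, this]; ring
    rw [e, Vs, ← ih.1, ← ih.2, Zsqrtd.re_sub, Zsqrtd.re_smul, Zsqrtd.re_smul]

lemma Vs_dvd (a Y : ℤ) (j : ℕ) : a ∣ Vs a Y (2*j+1) := by
  induction j with
  | zero => simp [Vs]
  | succ j ih =>
    change a ∣ 2 * a * Vs a Y (2*j+2) - Y * Vs a Y (2*j+1)
    exact dvd_sub (Dvd.intro_left 2 rfl |>.mul_right _) (ih.mul_left _)

lemma Vs_prime (a Y : ℤ) (p : ℕ) (hp : p.Prime) (hp2 : p ≠ 2) : (p : ℤ) ∣ Vs a Y p - a := by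
  have h1 := (Vs_eq a Y _ rfl p).1
  obtain ⟨r, hr⟩ := exists_add_pow_prime_eq hp ((a : ℤ) : ℤ√(a^2-Y)) (Zsqrtd.sqrtd)
  have e : ((a : ℤ) : ℤ√(a^2-Y)) + Zsqrtd.sqrtd = ⟨a, 1⟩ := by
    rw [Zsqrtd.ext_iff]; simp
  have hodd : Odd p := hp.odd_of_ne_two hp2
  obtain ⟨t, rfl⟩ := hodd
  have s : ((Zsqrtd.sqrtd : ℤ√(a^2-Y)) ^ (2*t+1)).re = 0 := by
    rw [pow_succ (Zsqrtd.sqrtd : ℤ√(a^2-Y)), pow_mul, pow_two Zsqrtd.sqrtd, Zsqrtd.dmuld, ← Int.cast_pow, Zsqrtd.re_smul]; simp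
  have hf : (((2*t+1 : ℕ)) : ℤ) ∣ a ^ (2*t+1) - a := by
    have := Fact.mk hp
    rw [← ZMod.intCast_zmod_eq_zero_iff_dvd _ (2*t+1)]
    push_cast
    rw [ZMod.pow_card]; simp
  rw [e] at hr
  have hre := congrArg Zsqrtd.re hr
  rw [h1] at hre
  rw [mul_assoc, mul_assoc, ← Int.cast_natCast (R := ℤ√(a^2-Y)) (2*t+1), Zsqrtd.re_add, Zsqrtd.re_add, s, Zsqrtd.re_smul, ← Int.cast_pow, Zsqrtd.re_intCast] at hre
  rw [hre]
  have := dvd_add hf (Dvd.intro _ rfl : (((2*t+1 : ℕ)) : ℤ) ∣ ((2*t+1 : ℕ) : ℤ) * ((a : ℤ√(a^2-Y)) * (Zsqrtd.sqrtd * r)).re)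
  have e2 : a ^ (2*t+1) + 0 + ((2*t+1 : ℕ) : ℤ) * ((a : ℤ√(a^2-Y)) * (Zsqrtd.sqrtd * r)).re - a = a ^ (2*t+1) - a + ((2*t+1 : ℕ) : ℤ) * ((a : ℤ√(a^2-Y)) * (Zsqrtd.sqrtd * r)).re := by ring
  rw [e2]; exact this

lemma Vs_mod4 (Y : ℤ) (hY : Y % 4 = 3) (j : ℕ) :
    Vs 5 Y (4*j+1) % 4 = 1 ∧ Vs 5 Y (4*j+2) % 4 = 3 ∧ Vs 5 Y (4*j+3) % 4 = 3 ∧ Vs 5 Y (4*j+4) % 4 = 1 := by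
  have step : ∀ i, Vs 5 Y (i+2) % 4 = (2 * Vs 5 Y (i+1) + Vs 5 Y i) % 4 := by
    intro i
    obtain ⟨z, hz⟩ : ∃ z, Y = 4 * z + 3 := ⟨Y / 4, by omega⟩
    have : Vs 5 Y (i+2) = 2 * Vs 5 Y (i+1) + Vs 5 Y i + 4 * (2 * Vs 5 Y (i+1) - (z+1) * Vs 5 Y i) := by
      rw [Vs, hz]; ring
    omega
  induction j with
  | zero =>
    have h0 := step 0
    have h1 := step 1
    have h2 := step 2
    have e0 : Vs 5 Y 0 = 1 := rfl
    have e1 : Vs 5 Y 1 = 5 := rfl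
    norm_num at h0 h1 h2 ⊢
    omega
  | succ j ih =>
    have h0 := step (4*j+3)
    have h1 := step (4*j+4)
    have h2 := step (4*j+5)
    have h3 := step (4*j+6)
    rw [show 4*(j+1)+1 = 4*j+5 by ring, show 4*(j+1)+2 = 4*j+6 by ring, show 4*(j+1)+3 = 4*j+7 by ring,
      show 4*(j+1)+4 = 4*j+8 by ring]
    simp only [add_assoc] at h0 h1 h2 h3
    norm_num at h0 h1 h2 h3 
    omega

/-- truncated expansion -/
def Ax (Y j : ℤ) : ℤ := 6*10^6 - 6*10^4*j*Y + 300*j*(j-3)*Y^2 - j*(j-4)*(j-5)*Y^3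

lemma six_dvd (j : ℕ) : (6:ℤ) ∣ ((j:ℤ)+4)*((j+4)-4)*((j+4)-5) := by
  have h : ∀ z : ZMod 6, (z+4)*((z+4)-4)*((z+4)-5) = 0 := by decide
  have := h ((j:ℤ) : ZMod 6)
  have h2 := (ZMod.intCast_zmod_eq_zero_iff_dvd (((j:ℤ)+4)*((j+4)-4)*((j+4)-5)) 6).1 (by push_cast at this ⊢; exact this)
  exact_mod_cast h2

lemma Vs_exp (Y : ℤ) (j : ℕ) :
    (6 * Y^4 ∣ 12 * 10^6 * Vs 5 Y (j+4) - 10^(j+4) * Ax Y (j+4)) ∧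
    (6 * Y^4 ∣ 12 * 10^6 * Vs 5 Y (j+5) - 10^(j+5) * Ax Y (j+5)) := by
  induction j with
  | zero =>
    constructor
    · refine ⟨0, ?_⟩
      simp [Vs, Ax]; ring
    · refine ⟨0, ?_⟩
      simp [Vs, Ax]; ring
  | succ j ih =>
    refine ⟨?_, ?_⟩
    · have := ih.2
      rw [show j+1+4 = j+5 by ring]
      convert this using 3
      push_cast; ring
    · obtain ⟨⟨q1, h1⟩, ⟨q2, h2⟩⟩ := ih
      rw [show j+1+5 = j+4+2 by ring, Vs, show j+4+1 = j+5 by ring]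
      obtain ⟨c, hc⟩ : ∃ c : ℤ, ((j:ℤ)+4)*((j+4)-4)*((j+4)-5) = 6 * c := six_dvd j
      refine ⟨10 * q2 - Y * q1 + 10^(j+4) * c, ?_⟩
      have e : 12 * 10^6 * (2 * 5 * Vs 5 Y (j+5) - Y * Vs 5 Y (j+4)) =
        10 * (6 * Y^4 * q2 + 10^(j+5) * Ax Y (j+5)) - Y * (6 * Y^4 * q1 + 10^(j+4) * Ax Y (j+4)) := by
        rw [← h1, ← h2]; ring
      rw [e]
      simp only [Ax, pow_add]
      push_cast
      linear_combination (10 ^ j * 10^4 * Y^4) * hc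

lemma bnd (p : ℕ) (hp : 17 ≤ p) : (6 * 10^(p+5) : ℤ) < (3 * 2^p)^4 * 3 ∧ (p+5:ℤ)^3 * 10 ≤ 3 * 2^p := by
  induction p, hp using Nat.le_induction with
  | base => norm_num
  | succ p hp ih =>
    obtain ⟨h1, h2⟩ := ih
    have hp' : (17:ℤ) ≤ p := by exact_mod_cast hp
    constructor
    · have : (3 * 2^(p+1):ℤ)^4 = 16 * (3*2^p)^4 := by rw [pow_succ]; ring
      rw [this, show p+1+5 = (p+5)+1 by ring, pow_succ]
      have : (0:ℤ) < 10^(p+5) := by positivity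
      linarith
    · push_cast
      rw [pow_succ (2:ℤ)]
      have : ((p:ℤ)+1+5)^3 ≤ 2 * (p+5)^3 := by nlinarith [mul_nonneg (by linarith : (0:ℤ) ≤ p - 17) (by positivity : (0:ℤ) ≤ (p:ℤ)^2)]
      linarith

lemma core5 (Y : ℤ) (p : ℕ) (hp17 : 17 ≤ p) (hp4 : p % 4 = 1) (hY2 : Odd Y) (hY5 : ¬ (5:ℤ) ∣ Y)
    (hYb : 4 * 2^p - 1 ≤ Y) (h : Vs 5 Y p = 5) : False := by
  obtain ⟨j, rfl⟩ : ∃ j, p = j + 4 := ⟨p-4, by omega⟩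
  have h1 := (Vs_exp Y j).1
  rw [h] at h1
  set P : ℤ := (j:ℤ)+4 with hP
  set B : ℤ := 6*10^6 + 6*10^4*P*Y + 300*P*(P+3)*Y^2 + P*(P+4)*(P+5)*Y^3 with hB
  have hcop : IsCoprime (Y^4) ((10:ℤ)^7) := by
    apply IsCoprime.pow
    rw [show (10:ℤ) = 2*5 by norm_num]
    apply IsCoprime.mul_right
    · exact (Int.isCoprime_iff_gcd_eq_one.2 (by
        obtain ⟨t, rfl⟩ := hY2
        rw [← Int.isCoprime_iff_gcd_eq_one]
        exact ⟨1, -t, by ring⟩))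
    · exact ((Int.prime_iff_natAbs_prime.2 (by norm_num : Nat.Prime (Int.natAbs 5))).coprime_iff_not_dvd.2 hY5).symm
  have h2 : Y^4 ∣ 10^7 * (6 * 10^(j+4+5) - B) := by
    obtain ⟨q, hq⟩ := h1
    obtain ⟨c, hc⟩ : ∃ c : ℤ, P*(P-4)*(P-5) = 6 * c := by
      have := six_dvd j
      obtain ⟨c, hc⟩ := this
      exact ⟨c, by rw [hP]; exact hc⟩
    refine ⟨-(q * B) - 10^(j+4) * (c * (6*10^4*P + 300*P*(P+3)*Y + P*(P+4)*(P+5)*Y^2) * (-1) + 50*P*(P-3)*(300*P*(P+3)) + 50*P*(P-3)*P*(P+4)*(P+5)*Y - 10^4*P*P*(P+4)*(P+5)), ?_⟩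
    rw [Ax] at hq
    have h6 : (6:ℤ) ≠ 0 := by norm_num
    apply mul_left_cancel₀ h6
    rw [show (10:ℤ)^(j+4+5) = 10^(j+4)*10^5 by rw [pow_add]]
    rw [hB] at *
    linear_combination (-(6*10^6 + 6*10^4*P*Y + 300*P*(P+3)*Y^2 + P*(P+4)*(P+5)*Y^3)) * hq + 10^(j+4) * Y^4 * (6*10^4*P + 300*P*(P+3)*Y + P*(P+4)*(P+5)*Y^2) * hc
  have h3 : Y^4 ∣ 6 * 10^(j+4+5) - B := hcop.dvd_of_dvd_mul_left h2
  obtain ⟨b1, b2⟩ := bnd (j+4) hp17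
  have hX : (2:ℤ)^17 ≤ 2^(j+4) := pow_le_pow_right₀ (by norm_num) hp17
  set X : ℤ := 2^(j+4)
  have hYX : 79 * X ≤ 20 * Y := by linarith
  have hP0 : 17 ≤ P := by rw [hP]; exact_mod_cast hp17
  have hY0 : 0 < Y := by linarith
  have b3 : 6 * 10^(j+4+5) < Y^4 := by
    have : (79 * X)^4 ≤ (20 * Y)^4 := pow_le_pow_left₀ (by linarith) hYX 4
    have hX4 : 0 ≤ X^4 := by positivity
    nlinarith
  have b4 : B < Y^4 := by
    have c1 : (P+5)^3 * 10 ≤ Y := by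
      have : ((j+4:ℕ):ℤ) = P := by rw [hP]; push_cast; rfl
      rw [this] at b2
      linarith
    have hPP : 0 ≤ P := by linarith
    have d3 : P*(P+4)*(P+5) ≤ (P+5)^3 := by nlinarith [mul_nonneg hPP hPP]
    have d2 : P*(P+3) ≤ (P+5)^3 := by nlinarith [mul_nonneg hPP hPP, mul_nonneg hPP (mul_nonneg hPP hPP)]
    have d1 : P ≤ (P+5)^3 := by nlinarith [mul_nonneg hPP hPP, mul_nonneg hPP (mul_nonneg hPP hPP)]
    have hY6 : 400000 ≤ Y := by linarith
    have k3 : 10 * (P*(P+4)*(P+5)*Y^3) ≤ Y^4 := by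
      have := mul_le_mul_of_nonneg_right (show 10 * (P*(P+4)*(P+5)) ≤ Y by linarith) (by positivity : 0 ≤ Y^3)
      linarith
    have k2 : 10 * (P*(P+3)*Y^2) ≤ Y^3 := by
      have := mul_le_mul_of_nonneg_right (show 10 * (P*(P+3)) ≤ Y by linarith) (by positivity : 0 ≤ Y^2)
      linarith
    have k1 : 10 * (P*Y) ≤ Y^2 := by
      have := mul_le_mul_of_nonneg_right (show 10 * P ≤ Y by linarith) (by positivity : 0 ≤ Y)
      linarith
    have y4 : 400000 * Y^3 ≤ Y^4 := by
      have := mul_le_mul_of_nonneg_right hY6 (by positivity : 0 ≤ Y^3)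
      linarith
    have y3 : 400000 * Y^2 ≤ Y^3 := by
      have := mul_le_mul_of_nonneg_right hY6 (by positivity : 0 ≤ Y^2)
      linarith
    have y2 : 400000 * Y ≤ Y^2 := by
      have := mul_le_mul_of_nonneg_right hY6 (by positivity : 0 ≤ Y)
      linarith
    rw [hB]
    linarith
  have b5 : 0 < B := by positivity
  have b6 : (0:ℤ) < 6 * 10^(j+4+5) := by positivity
  have h4 : 6 * 10^(j+4+5) - B = 0 := by
    apply Int.eq_zero_of_abs_lt_dvd h3
    rw [abs_lt]; constructor <;> linarith
  -- parity
  obtain ⟨s, hs⟩ : ∃ s : ℤ, P = 4 * s + 1 := ⟨(j+4:ℕ)/4, by rw [hP]; omega⟩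
  obtain ⟨t, ht⟩ : ∃ t : ℤ, Y^3 = 2 * t + 1 := hY2.pow
  have : B = 4 * (15*10^5 + 15*10^3*P*Y + 75*P*(P+3)*Y^2) + P*(P+4)*(P+5)*Y^3 := by rw [hB]; ring
  have h6 : P*(P+4)*(P+5)*Y^3 = 4 * ((2*t+1) * (16*s^3+48*s^2+41*s+7) + t+ s * 0) + 2 := by
    rw [ht, hs]; ring
  have h7 : (6 * 10^(j+4+5) : ℤ) = 4 * (15 * 10^(j+7) * 10) := by rw [show j+4+5 = j+7+2 by ring, pow_add]; ring
  omega

lemma core_main (a Y : ℤ) (p : ℕ) (hp : p.Prime) (hp2 : p ≠ 2) (hY4 : Y % 4 = 3)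
    (hY5 : ¬ (5:ℤ) ∣ Y) (hYb : 4 * 2^p - 1 ≤ Y) (h : Vs a Y p = 5) : False := by
  have h1 := Vs_prime a Y p hp hp2
  have hodd : Odd p := hp.odd_of_ne_two hp2
  have h2 : a ∣ 5 := by
    obtain ⟨t, rfl⟩ := hodd
    rw [← h]; exact Vs_dvd a Y t
  rw [h] at h1
  have hp3 : 3 ≤ p := by have := hp.two_le; omega
  have hX : (2:ℤ)^3 ≤ 2^p := pow_le_pow_right₀ (by norm_num) hp3
  have hle : p ≤ 12 ∨ 12 < p := le_or_gt _ _
  have h5p : p = 5 → (a = 5 ∨ a = -5) → False := by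
    rintro rfl (rfl | rfl)
    · simp only [Vs] at h
      ring_nf at h
      generalize Y^2 = z at h
      omega
    · simp only [Vs] at h
      ring_nf at h
      generalize Y^2 = z at h
      omega
  have ha : a = 1 ∨ a = -1 ∨ a = 5 ∨ a = -5 := by
    have : a.natAbs ∣ 5 := by exact_mod_cast Int.natAbs_dvd_natAbs.2 h2
    rcases (Nat.dvd_prime (by norm_num)).1 this with h | h <;> omega
  rcases ha with rfl | rfl | rfl | rfl
  · norm_num at h1
    have h1 : p ∣ 2^2 := by exact_mod_cast h1
    exact hp2 ((Nat.prime_dvd_prime_iff_eq hp Nat.prime_two).1 (hp.dvd_of_dvd_pow h1))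
  · norm_num at h1
    have h1 : p ∣ 2*3 := by exact_mod_cast h1
    rcases hp.dvd_mul.1 h1 with h1 | h1
    · exact hp2 ((Nat.prime_dvd_prime_iff_eq hp Nat.prime_two).1 h1)
    · obtain rfl := (Nat.prime_dvd_prime_iff_eq hp Nat.prime_three).1 h1
      simp [Vs] at h
      linarith
  · have hm : p % 4 = 1 := by
      by_contra hne
      have : p % 4 = 3 := by obtain ⟨t, rfl⟩ := hodd; omega
      have h3 := (Vs_mod4 Y hY4 (p/4)).2.2.1
      rw [show 4 * (p/4) + 3 = p by omega, h] at h3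
      norm_num at h3
    by_cases h17 : 17 ≤ p
    · exact core5 Y p h17 hm (Int.odd_iff.2 (by omega)) hY5 hYb h
    · have : p = 5 ∨ p = 9 ∨ p = 13 := by omega
      rcases this with rfl | rfl | rfl
      · exact h5p rfl (Or.inl rfl)
      · norm_num at hp
      · simp only [Vs] at h
        ring_nf at h
        have h' := congrArg (Int.cast : ℤ → ZMod 25) h
        push_cast at h'
        generalize (Y : ZMod 25) = y at h'
        revert h'
        revert y
        decide
  · norm_num at h1
    have h1 : p ∣ 2*5 := by exact_mod_cast h1
    rcases hp.dvd_mul.1 h1 with h1 | h1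
    · exact hp2 ((Nat.prime_dvd_prime_iff_eq hp Nat.prime_two).1 h1)
    · exact h5p ((Nat.prime_dvd_prime_iff_eq hp Nat.prime_five).1 h1) (Or.inr rfl)

lemma ded_dvd (R : Type*) [CommRing R] [IsDedekindDomain R] (n : ℕ) (hn : 0 < n)
    (α α' y : R) (h0 : α ≠ 0) (hmul : α * α' = y ^ n) (hc : IsCoprime α α')
    (H : ∀ p : ℕ, p.Prime → p ∣ n → ∀ (β : R) (u : Rˣ), β ^ p * u = α → False) :
    n ∣ Nat.card (ClassGroup R) := by
  have h1 : Ideal.span {α} * Ideal.span {α'} = (Ideal.span {y}) ^ n := by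
    rw [Ideal.span_singleton_mul_span_singleton, hmul, Ideal.span_singleton_pow]
  have hc' : IsUnit (gcd (Ideal.span {α}) (Ideal.span {α'})) := by
    have := (Ideal.isCoprime_span_singleton_iff _ _).2 hc
    rw [Ideal.isCoprime_iff_gcd] at this
    rw [this]; exact isUnit_one
  obtain ⟨J, hJ⟩ := exists_eq_pow_of_mul_eq_pow hc' h1
  have hJ0 : J ≠ 0 := by
    rintro rfl
    rw [zero_pow hn.ne'] at hJ
    exact h0 (Ideal.span_singleton_eq_bot.1 hJ)
  have hJm : J ∈ nonZeroDivisors (Ideal R) := mem_nonZeroDivisors_of_ne_zero hJ0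
  have key : ∀ m : ℕ, (ClassGroup.mk0 ⟨J, hJm⟩) ^ m = 1 ↔ Submodule.IsPrincipal (J ^ m) := by
    intro m
    rw [← map_pow, ← ClassGroup.mk0_eq_one_iff (pow_mem hJm m)]
    rfl
  have ho : orderOf (ClassGroup.mk0 ⟨J, hJm⟩) = n := by
    apply orderOf_eq_of_pow_and_pow_div_prime hn
    · rw [key, ← hJ]; exact ⟨α, rfl⟩
    · intro p hp hpn h
      rw [key] at h
      obtain ⟨β, hβ⟩ := h
      have h2 : Ideal.span {β ^ p} = Ideal.span {α} := by
        rw [hJ, ← Ideal.span_singleton_pow, Ideal.span, ← hβ, ← pow_mul, Nat.div_mul_cancel hpn]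
      obtain ⟨u, hu⟩ := Ideal.span_singleton_eq_span_singleton.1 h2
      exact H p hp hpn β u hu
  rw [← ho]; exact orderOf_dvd_natCard _

lemma rat_int {q : ℚ} (h : IsIntegral ℤ ((q : ℚ) : ℂ)) : ∃ z : ℤ, q = z := by
  have h2 : IsIntegral ℤ q := by
    have : (q : ℂ) = algebraMap ℚ ℂ q := by simp
    rw [this] at h
    exact (isIntegral_algebraMap_iff (algebraMap ℚ ℂ).injective).1 h
  obtain ⟨z, hz⟩ := IsIntegrallyClosed.isIntegral_iff.1 h2
  exact ⟨z, by rw [← hz]; simp⟩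

lemma parity (D M : ℤ) (v : ℚ) (hD : D % 4 = 2) (h : v ^ 2 * D = M) : M % 2 = 0 := by
  by_contra hM
  have hM : Odd M := Int.odd_iff.2 (by omega)
  have hden : (v.den : ℚ) ≠ 0 := by exact_mod_cast v.den_ne_zero
  have e : v.num ^ 2 * D = M * (v.den : ℤ) ^ 2 := by
    have : (v.num : ℚ)^2 * D = M * (v.den : ℚ)^2 := by
      rw [← h]
      nth_rewrite 2 [← Rat.num_div_den v]
      field_simp
    exact_mod_cast this
  obtain ⟨t, ht⟩ : ∃ t, D = 2 * (2 * t + 1) := ⟨D / 4, by omega⟩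
  rcases Int.even_or_odd (v.den : ℤ) with hd | hd
  · obtain ⟨s, hs⟩ := hd
    have hn : Even (v.num) := by
      by_contra hn
      rw [Int.not_even_iff_odd] at hn
      have h1 : Odd (v.num ^ 2 * (2 * t + 1)) := hn.pow.mul ⟨t, rfl⟩
      have h2 : v.num ^ 2 * (2 * t + 1) = 2 * (M * s^2) := by
        rw [ht, hs] at e; linarith
      rw [h2] at h1
      exact (Int.not_even_iff_odd.2 h1) (even_two_mul _)
    have hcop := v.reduced
    have h2 : 2 ∣ v.num.natAbs := by
      obtain ⟨r, hr⟩ := hn; omega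
    have h3 : 2 ∣ v.den := by omega
    have := Nat.dvd_gcd h2 h3
    rw [hcop] at this
    omega
  · have : Odd (v.num ^ 2 * D) := by rw [e]; exact hM.mul hd.pow
    rw [ht, show v.num ^ 2 * (2 * (2 * t + 1)) = 2 * (v.num ^ 2 * (2*t+1)) by ring] at this
    exact (Int.not_even_iff_odd.2 this) (even_two_mul _)

/-- the chosen square root -/
noncomputable def rtD (D : ℤ) : ℂ := (D : ℂ) ^ ((1 : ℂ) / 2)

lemma rtD_sq (D : ℤ) : rtD D ^ 2 = D := by
  have := Complex.cpow_nat_inv_pow (D : ℂ) (n := 2) (by norm_num)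
  rw [rtD, one_div]; exact_mod_cast this

lemma mem_form (D : ℤ) {x : ℂ} (hx : x ∈ Qsqrt D) : ∃ u v : ℚ, x = u + v * rtD D := by
  have hs := rtD_sq D
  rw [Qsqrt] at hx
  induction hx using IntermediateField.adjoin_induction with
  | mem x hx => exact ⟨0, 1, by rw [Set.mem_singleton_iff] at hx; rw [hx]; simp [rtD]⟩
  | algebraMap x => exact ⟨x, 0, by simp⟩
  | add x y _ _ hx hy =>
    obtain ⟨u, v, rfl⟩ := hx
    obtain ⟨u', v', rfl⟩ := hy
    exact ⟨u+u', v+v', by push_cast; ring⟩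
  | mul x y _ _ hx hy =>
    obtain ⟨u, v, rfl⟩ := hx
    obtain ⟨u', v', rfl⟩ := hy
    exact ⟨u*u' + v*v'*D, u*v'+u'*v, by push_cast; rw [← hs]; ring⟩
  | inv x _ hx =>
    obtain ⟨u, v, rfl⟩ := hx
    by_cases h : (u:ℂ) - v * rtD D = 0
    · by_cases h0 : (u:ℂ) + v * rtD D = 0
      · exact ⟨0, 0, by rw [h0]; simp⟩
      · have hu : (u:ℂ) = v * rtD D := by linear_combination h
        have hu0 : (u : ℂ) ≠ 0 := by
          intro hh; apply h0; rw [← hu, hh]; simp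
        exact ⟨1 / (2*u), 0, by rw [← hu]; push_cast; field_simp; ring⟩
    · by_cases h0 : (u:ℂ) + v * rtD D = 0
      · exact ⟨0, 0, by rw [h0]; simp⟩
      refine ⟨u / (u^2 - v^2*D), -v/(u^2-v^2*D), ?_⟩
      have e : (u:ℂ)^2 - v^2 * D = (u + v * rtD D) * (u - v * rtD D) := by rw [← hs]; ring
      push_cast
      rw [e]
      field_simp
      ring

lemma rtD_conj (D : ℤ) (hD : D < 0) : (starRingEnd ℂ) (rtD D) = - rtD D := by
  have hs := rtD_sq D
  have h2 : ((starRingEnd ℂ) (rtD D)) ^ 2 = (rtD D) ^ 2 := by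
    rw [← map_pow, hs]; simp
  rcases sq_eq_sq_iff_eq_or_eq_neg.1 h2 with h | h
  · obtain ⟨r, hr⟩ := Complex.conj_eq_iff_real.1 h
    rw [hr] at hs
    have : r ^ 2 = (D : ℝ) := by exact_mod_cast hs
    have hD' : (D : ℝ) < 0 := by exact_mod_cast hD
    nlinarith [sq_nonneg r]
  · exact h

lemma int_form (D : ℤ) (hD : D < 0) (hD4 : D % 4 = 2) {x : ℂ} (hx : x ∈ Qsqrt D)
    (hi : IsIntegral ℤ x) : ∃ (a : ℤ) (v : ℚ) (N : ℤ), x = a + v * rtD D ∧ (a:ℚ)^2 - v^2 * D = N := by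
  obtain ⟨u, v, rfl⟩ := mem_form D hx
  have hs := rtD_sq D
  have hcj : (starRingEnd ℂ) (u + v * rtD D) = u - v * rtD D := by
    rw [map_add, map_mul, rtD_conj D hD]; simp; ring
  have hi' : IsIntegral ℤ ((u:ℂ) - v * rtD D) := by
    rw [← hcj]
    exact hi.map (Complex.conjAe.toAlgHom.restrictScalars ℤ)
  obtain ⟨t, ht⟩ : ∃ t : ℤ, 2 * u = t := by
    apply rat_int
    have := hi.add hi'
    rw [show (u:ℂ) + v * rtD D + (u - v * rtD D) = ((2 * u : ℚ) : ℂ) by push_cast; ring] at this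
    exact this
  obtain ⟨N, hN⟩ : ∃ t : ℤ, u^2 - v^2*D = t := by
    apply rat_int
    have := hi.mul hi'
    rw [show ((u:ℂ) + v * rtD D) * (u - v * rtD D) = ((u^2 - v^2*D : ℚ) : ℂ) by
      push_cast; rw [← hs]; ring] at this
    exact this
  have hpar := parity D (t^2 - 4*N) (2*v) hD4 (by push_cast; rw [← ht, ← hN]; ring)
  have hte : Even t := by
    by_contra hne
    rw [Int.not_even_iff_odd] at hne
    obtain ⟨s, rfl⟩ := hne
    ring_nf at hpar
    generalize s^2 = z at hpar
    omega
  obtain ⟨a, ha⟩ := hte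
  have hu : u = a := by
    rw [ha] at ht; push_cast at ht; linarith
  subst hu
  exact ⟨a, v, N, by push_cast; rfl, hN⟩

lemma form_normSq (D : ℤ) (hD : D < 0) (a N : ℤ) (v : ℚ) (h : (a:ℚ)^2 - v^2 * D = N) :
    Complex.normSq (a + v * rtD D) = N := by
  have : (Complex.normSq (a + v * rtD D) : ℂ) = ((N : ℝ) : ℂ) := by
    rw [Complex.normSq_eq_conj_mul_self, map_add, map_mul, rtD_conj D hD]
    have h' : (a:ℂ)^2 - v^2 * D = N := by exact_mod_cast congrArg (Rat.cast : ℚ → ℂ) h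
    simp
    rw [← h', ← rtD_sq D]; ring
  exact_mod_cast this

lemma form_re (D : ℤ) (hD : D < 0) (a : ℝ) (v : ℝ) : ((a:ℂ) + v * rtD D).re = a := by
  have := congrArg Complex.re (rtD_conj D hD)
  simp at this
  simp
  right; linarith

lemma unit_form (D : ℤ) (hD : D < 0) (hD4 : D % 4 = 2) {x y : ℂ} (hx : x ∈ Qsqrt D)
    (hi : IsIntegral ℤ x) (hy : y ∈ Qsqrt D) (hiy : IsIntegral ℤ y) (hxy : x * y = 1) :
    x = 1 ∨ x = -1 := by
  obtain ⟨a, v, N, rfl, hN⟩ := int_form D hD hD4 hx hi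
  obtain ⟨a', v', N', rfl, hN'⟩ := int_form D hD hD4 hy hiy
  have h1 := congrArg Complex.normSq hxy
  rw [map_mul, form_normSq D hD _ _ _ hN, form_normSq D hD _ _ _ hN', map_one] at h1
  have h2 : N * N' = 1 := by exact_mod_cast h1
  have hDq : (D:ℚ) < 0 := by exact_mod_cast hD
  have hN0 : 0 ≤ N := by
    have : (0:ℚ) ≤ N := by rw [← hN]; nlinarith [sq_nonneg (a:ℚ), sq_nonneg v]
    exact_mod_cast this
  have hN1 : N = 1 := by
    rcases Int.mul_eq_one_iff_eq_one_or_neg_one.1 h2 with h | h <;> omega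
  subst hN1
  have hp := parity D (a^2-1) v hD4 (by push_cast at hN ⊢; linarith)
  have hle : a^2 ≤ 1 := by
    have : (a:ℚ)^2 ≤ 1 := by push_cast at hN; nlinarith [sq_nonneg v]
    exact_mod_cast this
  have ha : a = 1 ∨ a = -1 := by
    have : a ≤ 1 := by nlinarith
    have : -1 ≤ a := by nlinarith
    have : a ≠ 0 := by rintro rfl; norm_num at hp
    omega
  have hv : v = 0 := by
    have : v^2 * D = 0 := by rcases ha with rfl | rfl <;> (push_cast at hN; linarith)
    rcases mul_eq_zero.1 this with h | h
    · exact pow_eq_zero_iff (by norm_num) |>.1 h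
    · linarith
  subst hv
  rcases ha with rfl | rfl <;> simp

lemma power_case (D : ℤ) (hD : D < 0) (hD4 : D % 4 = 2) (p m : ℕ) (hp : p.Prime) (hp2 : p ≠ 2)
    (y : ℤ) (hDy : D = 25 - y ^ (m * p)) (hY4 : y ^ m % 4 = 3)
    (hY5 : ¬ (5:ℤ) ∣ y ^ m) (hYb : 4 * 2^p - 1 ≤ y ^ m)
    {x : ℂ} (hx : x ∈ Qsqrt D) (hi : IsIntegral ℤ x) (h : x ^ p = 5 + rtD D) : False := by
  obtain ⟨a, v, N, rfl, hN⟩ := int_form D hD hD4 hx hi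
  have hn := congrArg Complex.normSq h
  have e5 : (5:ℂ) + rtD D = ((5:ℤ):ℂ) + ((1:ℚ):ℂ) * rtD D := by push_cast; ring
  rw [map_pow, form_normSq D hD _ _ _ hN, e5,
    form_normSq D hD 5 (y^(m*p)) 1 (by rw [hDy]; push_cast; ring)] at hn
  have hn' : N ^ p = (y ^ m) ^ p := by rw [← pow_mul]; exact_mod_cast hn
  have hNy : N = y ^ m := (hp.odd_of_ne_two hp2).strictMono_pow.injective hn'
  subst hNy
  let w : ℤ := a^2 - y^m
  have hw : ((v:ℂ) * rtD D) * ((v:ℂ) * rtD D) = (w : ℂ) := by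
    have h' : (a:ℂ)^2 - v^2 * D = (y:ℂ)^m := by exact_mod_cast congrArg (Rat.cast : ℚ → ℂ) hN
    simp only [w]; push_cast
    rw [← h', ← rtD_sq D]; ring
  have hl : Zsqrtd.lift ⟨_, hw⟩ ((⟨a, 1⟩ : ℤ√w) ^ p) = 5 + rtD D := by
    rw [← h, map_pow]; simp
  have hV := (Vs_eq a (y^m) w rfl p).1
  rw [Zsqrtd.lift_apply_apply] at hl
  have hre := congrArg Complex.re hl
  set z := (⟨a, 1⟩ : ℤ√w) ^ p
  have r1 := form_re D hD (z.re : ℝ) (z.im * v : ℝ)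
  have r2 := form_re D hD 5 1
  have hz : (z.re : ℝ) = 5 := by
    rw [← r1, ← r2]
    push_cast at hre ⊢
    rw [one_mul, ← hre]
    ring_nf
  have hz' : z.re = 5 := by exact_mod_cast hz
  exact core_main a (y^m) p hp hp2 hY4 hY5 hYb (by rw [← hV, hz'])

lemma Qsqrt_eq (D E : ℤ) (h : E = 4 * D) : Qsqrt E = Qsqrt D := by
  have h1 : rtD E ^ 2 = (2 * rtD D) ^ 2 := by
    rw [rtD_sq, mul_pow, rtD_sq, h]; push_cast; norm_num
  have hD : rtD D ∈ Qsqrt D := IntermediateField.mem_adjoin_simple_self ℚ _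
  have hE : rtD E ∈ Qsqrt E := IntermediateField.mem_adjoin_simple_self ℚ _
  have c2 : ∀ K : IntermediateField ℚ ℂ, (2:ℂ) ∈ K := fun K => by exact_mod_cast natCast_mem K 2
  apply le_antisymm
  · rw [Qsqrt, IntermediateField.adjoin_simple_le_iff]
    change rtD E ∈ _
    rcases sq_eq_sq_iff_eq_or_eq_neg.1 h1 with h | h <;> rw [h]
    · exact mul_mem (c2 _) hD
    · exact neg_mem (mul_mem (c2 _) hD)
  · rw [Qsqrt, IntermediateField.adjoin_simple_le_iff]
    change rtD D ∈ _
    rcases sq_eq_sq_iff_eq_or_eq_neg.1 h1 with h | h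
    · have : rtD D = rtD E / 2 := by rw [h]; ring
      rw [this]; exact div_mem hE (c2 _)
    · have : rtD D = -(rtD E / 2) := by rw [h]; ring
      rw [this]; exact neg_mem (div_mem hE (c2 _))

lemma main_dvd (n : ℕ) (hn : 3 ≤ n) (hnodd : Odd n) (y : ℤ) (hyb : 4 * 2 ^ n - 1 ≤ y)
    (hy4 : y % 4 = 3) (h5 : ¬ (5 : ℤ) ∣ y) : n ∣ classNumSqrt (25 - y ^ n) := by
  have hodd4 : ∀ m : ℕ, Odd m → y ^ m % 4 = 3 := by
    rintro m ⟨t, rfl⟩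
    have h : y ≡ -1 [ZMOD 4] := by unfold Int.ModEq; omega
    have := h.pow (2*t+1)
    rw [Odd.neg_one_pow ⟨t, rfl⟩] at this
    unfold Int.ModEq at this; omega
  have h2n : (2:ℤ)^3 ≤ 2^n := pow_le_pow_right₀ (by norm_num) hn
  have hy31 : 31 ≤ y := by linarith
  have hyn : y ≤ y ^ n := by
    have := pow_le_pow_right₀ (by linarith : (1:ℤ) ≤ y) (by omega : 1 ≤ n)
    simpa using this
  set D : ℤ := 25 - y ^ n with hDdef
  have hD : D < 0 := by linarith
  have hD4 : D % 4 = 2 := by have := hodd4 n hnodd; omega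
  have hint : IsIntegral ℤ (rtD D) := by
    apply IsIntegral.of_pow (n := 2) (by norm_num)
    rw [rtD_sq]; exact isIntegral_algebraMap (R := ℤ) (A := ℂ) (x := D)
  have : FiniteDimensional ℚ (Qsqrt D) :=
    IntermediateField.adjoin.finiteDimensional (hint.tower_top)
  have : NumberField (Qsqrt D) := ⟨⟩
  let δK : Qsqrt D := ⟨rtD D, IntermediateField.mem_adjoin_simple_self ℚ _⟩
  have hδK : IsIntegral ℤ δK := by
    rw [← isIntegral_algebraMap_iff (B := ℂ) (algebraMap (Qsqrt D) ℂ).injective]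
    exact hint
  let δ : NumberField.RingOfIntegers (Qsqrt D) := ⟨δK, hδK⟩
  let ι : NumberField.RingOfIntegers (Qsqrt D) →+* ℂ :=
    (algebraMap (Qsqrt D) ℂ).comp (algebraMap (NumberField.RingOfIntegers (Qsqrt D)) (Qsqrt D))
  have hι : Function.Injective ι :=
    (algebraMap (Qsqrt D) ℂ).injective.comp (FaithfulSMul.algebraMap_injective _ _)
  have hιδ : ι δ = rtD D := rfl
  have hιm : ∀ x, ι x ∈ Qsqrt D := fun x => (algebraMap _ (Qsqrt D) x).2
  have hιi : ∀ x, IsIntegral ℤ (ι x) := fun x =>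
    (NumberField.RingOfIntegers.isIntegral_coe x).map ((algebraMap (Qsqrt D) ℂ).toIntAlgHom)
  have hprod : (5 + δ) * (5 - δ) = ((y:ℤ) : NumberField.RingOfIntegers (Qsqrt D)) ^ n := by
    apply hι
    simp only [map_mul, map_add, map_sub, map_pow, hιδ, map_intCast, map_ofNat]
    have := rtD_sq D
    rw [hDdef] at this
    push_cast at this
    linear_combination -this
  apply ded_dvd _ n (by omega) (5 + δ) (5 - δ) (y : ℤ) ?_ hprod ?_ ?_
  · intro h0
    rw [h0, zero_mul] at hprod
    have := (pow_eq_zero_iff (by omega)).1 hprod.symm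
    have : y = 0 := by exact_mod_cast this
    omega
  · have hc : IsCoprime (10:ℤ) (y^n) := by
      apply IsCoprime.pow_right
      rw [show (10:ℤ) = 2*5 by norm_num]
      apply IsCoprime.mul_left
      · exact ⟨-(y/2), 1, by omega⟩
      · exact (Int.prime_iff_natAbs_prime.2 (by norm_num : Nat.Prime (Int.natAbs 5))).coprime_iff_not_dvd.2 h5
    obtain ⟨r, s, hrs⟩ := hc
    have hrs' := congrArg (Int.cast : ℤ → NumberField.RingOfIntegers (Qsqrt D)) hrs
    push_cast at hrs'
    rw [← hprod] at hrs'
    exact ⟨r, r + s * (5 + δ), by rw [← hrs']; ring⟩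
  · intro p hp hpn β u hu
    obtain ⟨m, rfl⟩ := hpn
    have hpodd : Odd p := (Nat.odd_mul.1 hnodd).1
    have hmodd : Odd m := (Nat.odd_mul.1 hnodd).2
    have hp2 : p ≠ 2 := by rintro rfl; exact absurd hpodd (by decide)
    have hu' := congrArg ι hu
    rw [map_mul, map_pow, map_add, hιδ, map_ofNat] at hu'
    have hm0 : 0 < m := hmodd.pos
    have hYb : 4 * 2^p - 1 ≤ y ^ m := by
      have e1 : (2:ℤ)^p ≤ 2^(p*m) := pow_le_pow_right₀ (by norm_num) (Nat.le_mul_of_pos_right _ hm0)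
      have e2 : y ≤ y ^ m := by
        have := pow_le_pow_right₀ (by linarith : (1:ℤ) ≤ y) (by omega : 1 ≤ m)
        simpa using this
      linarith
    have hY5 : ¬ (5:ℤ) ∣ y ^ m := fun hh => h5
      ((Int.prime_iff_natAbs_prime.2 (by norm_num : Nat.Prime (Int.natAbs 5))).dvd_of_dvd_pow hh)
    have hP := fun x : NumberField.RingOfIntegers (Qsqrt D) =>
      power_case D hD hD4 p m hp hp2 y (by rw [hDdef, mul_comm p m])
        (hodd4 m hmodd) hY5 hYb (hιm x) (hιi x)
    have huu : ι u * ι (u⁻¹ : (NumberField.RingOfIntegers (Qsqrt D))ˣ) = 1 := by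
      rw [← map_mul]; simp
    rcases unit_form D hD hD4 (hιm _) (hιi _) (hιm _) (hιi _) huu with h | h
    · exact hP β (by rw [← hu', h, mul_one])
    · exact hP (-β) (by rw [← hu', h, map_neg, hpodd.neg_pow]; ring)

/-- Let `n ≥ 3` be an odd integer and `k ≥ 2` an integer with `5 ∤ (4kⁿ − 1)`, and set
`d = 4(1 − 4kⁿ)ⁿ`. Then `d + 100 = 4(25 − (4kⁿ − 1)ⁿ)`, so
`ℚ(√(d + 100)) = ℚ(√(25 − (4kⁿ − 1)ⁿ))`, and `n` divides the class number of
`ℚ(√(d + 100))`. -/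
theorem classNumber_dvd_d_add_hundred
    (n : ℕ) (hn : 3 ≤ n) (hnodd : Odd n) (k : ℤ) (hk : 2 ≤ k)
    (h5 : ¬ (5 : ℤ) ∣ (4 * k ^ n - 1))
    (d : ℤ) (hd : d = 4 * (1 - 4 * k ^ n) ^ n) :
    d + 100 = 4 * (25 - (4 * k ^ n - 1) ^ n) ∧
      Qsqrt (d + 100) = Qsqrt (25 - (4 * k ^ n - 1) ^ n) ∧
      n ∣ classNumSqrt (d + 100) := by
  have h1 : d + 100 = 4 * (25 - (4 * k ^ n - 1) ^ n) := by
    rw [hd, show (1 - 4 * k ^ n : ℤ) = -(4 * k ^ n - 1) by ring, hnodd.neg_pow]; ring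
  have h2 := Qsqrt_eq _ _ h1
  refine ⟨h1, h2, ?_⟩
  have hkn : (2:ℤ)^n ≤ k^n := pow_le_pow_left₀ (by norm_num) hk n
  have := main_dvd n hn hnodd (4 * k ^ n - 1) (by linarith) (by omega) h5
  rw [classNumSqrt] at this ⊢
  have gen : ∀ K L : IntermediateField ℚ ℂ, K = L →
      Nat.card (ClassGroup (NumberField.RingOfIntegers K)) =
        Nat.card (ClassGroup (NumberField.RingOfIntegers L)) := by
    rintro K _ rfl; rfl
  exact (gen _ _ h2) ▸ this
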